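/- arXiv:1801.03543 — 6 statements merged into one kernel-verified Lean document; each statement's English description precedes it below -/
import Mathlib

section
/- For every integer N ≥ 2 there exists a unique formal power series g ∈ ℂ[[t]] with constant coefficient 1 satisfying g(t·(1+N·t)⁻¹) = g(t)·(1−t²) in ℂ[[t]]. (Writing t = u⁻¹, this is the existence and uniqueness of the series g(u) ∈ 1 + u⁻¹ℂ[[u⁻¹]] satisfying the functional equation g(u+N) = g(u)(1−u⁻²) that normalizes the Yang R-matrix.) -/
/-- Composition `f ↦ f(a)` of a formal power series `f` with a power series `a`
(intended for `a` with zero constant coefficient), defined coefficientwise: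
the `m`-th coefficient of `f(a)` is `∑_{n ≤ m} fₙ · (coeff m of aⁿ)`.
When the constant coefficient of `a` vanishes, `coeff m (aⁿ) = 0` for `n > m`,
so this is the usual substitution `f(a) = ∑ₙ fₙ aⁿ`. -/
noncomputable def PowerSeries.substC (a f : PowerSeries ℂ) : PowerSeries ℂ :=
  PowerSeries.mk fun m =>
    ∑ n ∈ Finset.range (m + 1), PowerSeries.coeff n f * PowerSeries.coeff m (a ^ n)

open PowerSeries in
theorem aux_coeff (a b : PowerSeries ℂ) (hab : a = X * b) (hb : constantCoeff b = 1) (c : ℂ)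
    (hc : coeff 1 b = c) (m : ℕ) :
    coeff m (a ^ m) = 1 ∧ coeff (m + 1) (a ^ m) = m * c := by
  have h1 : ∀ m : ℕ, coeff 1 (b ^ m) = m * c := by
    intro m
    induction m with
    | zero => simp [coeff_one]
    | succ k ih =>
      rw [pow_succ, coeff_mul, Finset.Nat.antidiagonal_succ]
      simp [hb, hc, ih]
      ring
  subst hab
  rw [mul_pow]
  constructor
  · have := coeff_X_pow_mul (b ^ m) m 0
    rw [zero_add] at this
    rw [this]; simp [hb]
  · rw [add_comm m 1, coeff_X_pow_mul, h1]

noncomputable def auxG (N : ℂ) (c : ℕ → ℕ → ℂ) : ℕ → ℂ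
  | 0 => 1
  | k + 1 => (∑ n : Fin (k + 1), auxG N c n * c (k + 2) n + auxG N c k) / (N * (k + 1))

open PowerSeries in
theorem aux_iff (N : ℂ) (hN : N ≠ 0) (a g : PowerSeries ℂ)
    (ha : ∀ m : ℕ, coeff m (a ^ m) = 1 ∧ coeff (m + 1) (a ^ m) = m * (-N)) :
    substC a g = g * (1 - X ^ 2) ↔ ∀ k : ℕ, coeff (k + 1) g =
      (∑ n : Fin (k + 1), coeff n g * coeff (k + 2) (a ^ (n : ℕ)) + coeff k g) / (N * (k + 1)) := by
  have key : ∀ k : ℕ, coeff (k + 2) (substC a g) = coeff (k + 2) (g * (1 - X ^ 2)) ↔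
      coeff (k + 1) g =
      (∑ n : Fin (k + 1), coeff n g * coeff (k + 2) (a ^ (n : ℕ)) + coeff k g) / (N * (k + 1)) := by
    intro k
    have hk : (k : ℂ) + 1 ≠ 0 := by exact_mod_cast k.succ_ne_zero
    rw [eq_div_iff (mul_ne_zero hN hk), mul_sub, mul_one, map_sub, coeff_mul_X_pow, substC,
      coeff_mk, Finset.sum_range_succ, Finset.sum_range_succ, (ha (k + 2)).1, (ha (k + 1)).2,
      Fin.sum_univ_eq_sum_range (fun n => coeff n g * coeff (k + 2) (a ^ n))]
    push_cast
    constructor <;> intro h <;> linear_combination -h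
  constructor
  · intro h k
    exact (key k).1 (by rw [h])
  · intro h
    ext m
    match m with
    | 0 => simp [substC, coeff_zero_eq_constantCoeff]
    | 1 =>
      have h1 := (ha 1).1
      have h2 := (ha 0).2
      simp only [pow_one] at h1
      rw [mul_sub, map_sub, coeff_mul_X_pow']
      simp [substC, Finset.sum_range_succ, h1, coeff_one]
    | k + 2 => exact (key k).2 (h k)

/-- For every integer `N ≥ 2` there is a unique formal power series `g ∈ ℂ[[t]]`
with constant coefficient `1` satisfying `g(t·(1+N·t)⁻¹) = g(t)·(1−t²)`
(the functional equation `g(u+N) = g(u)(1−u⁻²)` in the variable `t = u⁻¹`). -/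
theorem statement0 (N : ℕ) (hN : 2 ≤ N) :
    ∃! g : PowerSeries ℂ,
      PowerSeries.constantCoeff g = 1 ∧
      PowerSeries.substC
        (PowerSeries.X * (1 + (N : ℂ) • PowerSeries.X)⁻¹) g
        = g * (1 - PowerSeries.X ^ 2) := by
  have hN0 : (N : ℂ) ≠ 0 := by exact_mod_cast (by omega : N ≠ 0)
  set b : PowerSeries ℂ := (1 + (N : ℂ) • PowerSeries.X)⁻¹ with hbdef
  have hmul : (1 + (N : ℂ) • PowerSeries.X) * b = 1 :=
    PowerSeries.mul_inv_cancel _ (by simp)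
  have hb : PowerSeries.constantCoeff b = 1 := by
    have := congrArg PowerSeries.constantCoeff hmul
    simpa using this
  have hc : PowerSeries.coeff 1 b = -(N : ℂ) := by
    have := congrArg (PowerSeries.coeff 1) hmul
    rw [add_mul, one_mul, smul_mul_assoc, map_add, PowerSeries.coeff_smul,
      show (1 : ℕ) = 0 + 1 from rfl, PowerSeries.coeff_succ_X_mul] at this
    simp [hb, PowerSeries.coeff_one] at this
    linear_combination this
  have ha := aux_coeff (PowerSeries.X * b) b rfl hb _ hc
  generalize PowerSeries.X * b = a at ha
  have hiff := fun g => aux_iff (N : ℂ) hN0 a g ha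
  refine ⟨PowerSeries.mk (auxG N fun m n => PowerSeries.coeff m (a ^ n)), ⟨?_, ?_⟩, ?_⟩
  · rw [← PowerSeries.coeff_zero_eq_constantCoeff_apply, PowerSeries.coeff_mk, auxG]
  · rw [hiff]
    intro k
    simp only [PowerSeries.coeff_mk]
    rw [auxG]
  · rintro g ⟨hg0, hg⟩
    rw [hiff] at hg
    ext m
    rw [PowerSeries.coeff_mk]
    induction m using Nat.strong_induction_on with
    | _ m ih =>
      match m with
      | 0 => rw [auxG, PowerSeries.coeff_zero_eq_constantCoeff_apply, hg0]
      | k + 1 =>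
        rw [hg k, auxG, ih k (by omega)]
        congr 2
        refine Finset.sum_congr rfl fun n _ => ?_
        rw [ih n (by omega)]
end

section
/- Let N be a nonzero complex number. If a formal power series f ∈ ℂ[[t]] satisfies f(t·(1+N·t)⁻¹) = f(t) in ℂ[[t]], then f is constant, i.e. f equals its constant coefficient. (In the variable u with t = u⁻¹, any series in ℂ[[u⁻¹]] invariant under the shift u ↦ u+N is constant; this gives the uniqueness of the normalizing series g and underlies the unitarity of the normalized Yang R-matrix.) -/
open PowerSeries in
theorem aux_b (N : ℂ) : constantCoeff ((1 + N • (X : PowerSeries ℂ))⁻¹) = 1 ∧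
    coeff 1 ((1 + N • (X : PowerSeries ℂ))⁻¹) = -N := by
  have h0 : constantCoeff ((1 + N • (X : PowerSeries ℂ))⁻¹) = 1 := by
    simp [PowerSeries.constantCoeff_inv]
  refine ⟨h0, ?_⟩
  have h : (1 + N • (X : PowerSeries ℂ)) * (1 + N • (X : PowerSeries ℂ))⁻¹ = 1 :=
    PowerSeries.mul_inv_cancel _ (by simp)
  have h1 := congrArg (coeff 1) h
  rw [add_mul, one_mul, smul_mul_assoc, map_add, coeff_smul,
    show (1 : ℕ) = 0 + 1 from rfl, coeff_succ_X_mul, coeff_zero_eq_constantCoeff_apply, h0] at h1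
  simp [coeff_one] at h1
  linear_combination h1

open PowerSeries in
theorem aux_pow (b : PowerSeries ℂ) (N : ℂ) (h0 : constantCoeff b = 1) (h1 : coeff 1 b = -N)
    (k : ℕ) : coeff 1 (b ^ k) = -(k * N) := by
  induction k with
  | zero => simp [coeff_one]
  | succ k ih =>
    rw [pow_succ, coeff_mul]
    simp [Finset.antidiagonal, Finset.Nat.antidiagonal_succ, ih, h0, h1]
    ring

/-- For a nonzero complex number `N`, any formal power series `f ∈ ℂ[[t]]` with
`f(t·(1+N·t)⁻¹) = f(t)` is constant, i.e. equals its constant coefficient.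
(In the variable `u` with `t = u⁻¹`: any series invariant under `u ↦ u + N` is constant.) -/
theorem statement1 (N : ℂ) (hN : N ≠ 0) (f : PowerSeries ℂ)
    (hf : PowerSeries.substC (PowerSeries.X * (1 + N • PowerSeries.X)⁻¹) f = f) :
    f = PowerSeries.C (PowerSeries.constantCoeff f) := by
  obtain ⟨h0, h1⟩ := aux_b N
  generalize (1 + N • (PowerSeries.X : PowerSeries ℂ))⁻¹ = b at hf h0 h1
  have key : ∀ k : ℕ, k ≠ 0 → PowerSeries.coeff k f = 0 := by
    intro k
    induction k using Nat.strong_induction_on with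
    | _ k ih =>
      intro hk
      have h := congrArg (PowerSeries.coeff (k + 1)) hf
      rw [PowerSeries.substC, PowerSeries.coeff_mk, Finset.sum_range_succ,
        Finset.sum_range_succ, Finset.sum_eq_zero] at h
      · have e1 : PowerSeries.coeff (k + 1) ((PowerSeries.X * b) ^ k) = -(k * N) := by
          rw [mul_pow, add_comm k 1, PowerSeries.coeff_X_pow_mul]
          exact aux_pow b N h0 h1 k
        have e2 : PowerSeries.coeff (k + 1) ((PowerSeries.X * b) ^ (k + 1)) = 1 := by
          have := PowerSeries.coeff_X_pow_mul (b ^ (k + 1)) (k + 1) 0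
          rw [zero_add] at this
          rw [mul_pow, this]
          simp [h0]
        rw [e1, e2] at h
        have h2 : PowerSeries.coeff k f * (k * N) = 0 := by linear_combination -h
        have h3 : (k : ℂ) * N ≠ 0 := mul_ne_zero (by exact_mod_cast hk) hN
        exact (mul_eq_zero.mp h2).resolve_right h3
      · intro n hn
        rcases Nat.eq_zero_or_pos n with rfl | hp
        · simp [PowerSeries.coeff_one]
        · rw [ih n (Finset.mem_range.mp hn) hp.ne', zero_mul]
  ext k
  rcases Nat.eq_zero_or_pos k with rfl | hp
  · simp
  · rw [key k hp.ne', PowerSeries.coeff_C, if_neg hp.ne']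
end

section
/- Let N ≥ 2 be an integer and let g ∈ ℂ[[t]] be the unique power series with constant coefficient 1 satisfying g(t·(1+N·t)⁻¹) = g(t)·(1−t²). Then the normalized Yang R-matrix satisfies the unitarity property R̄(u)·R̄(−u) = 1; concretely, in End(ℂ^N) ⊗ End(ℂ^N) with entries in the formal power series ring ℂ[[h,t]] one has ( g(h·t)·(1 − h·t·P) ) · ( g(−h·t)·(1 + h·t·P) ) = 1, where g(±h·t) denotes the series obtained from g by substituting ±h·t for t. Equivalently, g(t)·g(−t)·(1−t²) = 1 in ℂ[[t]]. -/
/-- Substitution of a two-variable power series `a ∈ ℂ[[h,t]]` (intended with zero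
constant coefficient) into a one-variable power series `f`, giving `f(a) = ∑ₙ fₙ aⁿ`,
defined coefficientwise: the coefficient of a monomial `d` is `∑_{n ≤ deg d} fₙ · coeff_d(aⁿ)`. -/
noncomputable def substM (a : MvPowerSeries (Fin 2) ℂ) (f : PowerSeries ℂ) :
    MvPowerSeries (Fin 2) ℂ :=
  fun d => ∑ n ∈ Finset.range (d.sum (fun _ k => k) + 1),
    PowerSeries.coeff n f * MvPowerSeries.coeff d (a ^ n)

/-- The permutation operator `P : x ⊗ y ↦ y ⊗ x` on `ℂ^N ⊗ ℂ^N`, as a matrix with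
entries in `ℂ[[h,t]]`: `P_{(i,j),(k,l)} = δ_{i,l} δ_{j,k}`. -/
noncomputable def Pmat (N : ℕ) :
    Matrix (Fin N × Fin N) (Fin N × Fin N) (MvPowerSeries (Fin 2) ℂ) :=
  Matrix.of fun p q => if p.1 = q.2 ∧ p.2 = q.1 then 1 else 0

open PowerSeries in
lemma substC_eq (a f : PowerSeries ℂ) (ha : PowerSeries.constantCoeff a = 0) :
    PowerSeries.substC a f = PowerSeries.subst a f := by
  ext m
  rw [PowerSeries.coeff_subst' (HasSubst.of_constantCoeff_zero' ha), PowerSeries.substC,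
    PowerSeries.coeff_mk, finsum_eq_sum_of_support_subset (s := Finset.range (m + 1))]
  · simp only [smul_eq_mul]
  · intro n hn
    by_contra h
    apply hn
    have h' : m < n := by simpa using h
    have : PowerSeries.coeff m (a ^ n) = 0 := by
      apply PowerSeries.coeff_of_lt_order
      exact lt_of_lt_of_le (by exact_mod_cast h')
        (PowerSeries.le_order_pow_of_constantCoeff_eq_zero n ha)
    simp [this]

lemma substM_eq (a : MvPowerSeries (Fin 2) ℂ) (f : PowerSeries ℂ)
    (ha : MvPowerSeries.constantCoeff a = 0) :
    substM a f = PowerSeries.subst a f := by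
  ext d
  rw [PowerSeries.coeff_subst (PowerSeries.HasSubst.of_constantCoeff_zero ha),
    finsum_eq_sum_of_support_subset (s := Finset.range (d.sum (fun _ k => k) + 1))]
  · rfl
  · intro n hn
    by_contra h
    apply hn
    have h' : d.degree < n := by
      have : d.sum (fun _ k => k) < n := by simpa using h
      exact this
    have : MvPowerSeries.coeff d (a ^ n) = 0 := by
      apply MvPowerSeries.coeff_of_lt_order
      exact lt_of_lt_of_le (Nat.cast_lt.mpr h')
        (MvPowerSeries.le_order_pow_of_constantCoeff_eq_zero n ha)
    simp [this]

open PowerSeries in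
lemma fixed_eq (c : ℂ) (hc : c ≠ 0) (v f : PowerSeries ℂ) (hv0 : constantCoeff v = 1)
    (hv1 : coeff 1 v = c)
    (hf : PowerSeries.subst (X * v) f = f) (hf1 : constantCoeff f = 1) : f = 1 := by
  have hb0 : constantCoeff (X * v) = 0 := by simp
  have hb := HasSubst.of_constantCoeff_zero' hb0
  by_contra hne
  have hq : f - 1 ≠ 0 := sub_ne_zero.mpr hne
  obtain ⟨n, p, hp, hp0⟩ : ∃ (n : ℕ) (p : PowerSeries ℂ), f - 1 = X ^ n * p ∧
      constantCoeff p ≠ 0 := by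
    refine ⟨(f-1).order.toNat, divXPowOrder (f-1), (X_pow_order_mul_divXPowOrder).symm, ?_⟩
    rwa [Ne, constantCoeff_divXPowOrder_eq_zero_iff]
  have hn : n ≠ 0 := by
    rintro rfl
    apply hp0
    have := congrArg constantCoeff hp
    simpa [hf1] using this.symm
  have h1 : PowerSeries.subst (X * v) (f - 1) = f - 1 := by
    rw [← coe_substAlgHom hb] at hf ⊢
    rw [map_sub, hf, map_one]
  rw [hp, subst_mul hb, subst_pow hb, subst_X hb, mul_pow, mul_assoc] at h1
  have h2 := mul_left_cancel₀ (pow_ne_zero n X_ne_zero) h1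
  have h3 := congrArg (coeff 1) h2
  rw [← substC_eq _ _ hb0, coeff_one_mul, coeff_one_pow, hv1, hv0] at h3
  have h4 : coeff 1 (PowerSeries.substC (X * v) p) = coeff 1 p := by
    simp [PowerSeries.substC, Finset.sum_range_succ, hv0, coeff_one]
  have h5 : constantCoeff (PowerSeries.substC (X * v) p) = constantCoeff p := by
    rw [← coeff_zero_eq_constantCoeff_apply]
    simp [PowerSeries.substC]
  rw [h4, h5] at h3
  rw [map_pow, hv0] at h3
  simp [hn, hc, hp0] at h3

open PowerSeries in
lemma scalar_id (N : ℕ) (hN : 2 ≤ N) (g : PowerSeries ℂ)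
    (hg1 : PowerSeries.constantCoeff g = 1)
    (hg : PowerSeries.substC (PowerSeries.X * (1 + (N : ℂ) • PowerSeries.X)⁻¹) g
        = g * (1 - PowerSeries.X ^ 2)) :
    g * PowerSeries.subst (-PowerSeries.X : PowerSeries ℂ) g * (1 - PowerSeries.X ^ 2) = 1 := by
  set w : PowerSeries ℂ := 1 + (N : ℂ) • PowerSeries.X with hw
  have hw0 : constantCoeff w = 1 := by simp [hw]
  have hwv : w * w⁻¹ = 1 := PowerSeries.mul_inv_cancel _ (by rw [hw0]; exact one_ne_zero)
  set v := w⁻¹ with hvdef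
  have hv0 : constantCoeff v = 1 := by simp [hvdef, hw0]
  have hv1 : coeff 1 v = -(N : ℂ) := by
    have := congrArg (coeff 1) hwv
    rw [coeff_one_mul, hw0, hv0] at this
    simp [hw, coeff_one] at this
    linear_combination this
  have hb0 : constantCoeff (X * v) = 0 := by simp
  have hb := HasSubst.of_constantCoeff_zero' hb0
  have hs0 : constantCoeff (-(X * v)) = 0 := by simp
  have hs := HasSubst.of_constantCoeff_zero' hs0
  have hm0 : constantCoeff (-X : PowerSeries ℂ) = 0 := by simp
  have hm := HasSubst.of_constantCoeff_zero' hm0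
  rw [substC_eq _ _ hb0] at hg
  have hbm : PowerSeries.subst (X * v) (-X : PowerSeries ℂ) = -(X * v) := by
    rw [← coe_substAlgHom hb, map_neg, substAlgHom_X]
  have hsb : PowerSeries.subst (-(X * v)) (X * v) = -X := by
    have h1 : PowerSeries.subst (-(X * v)) (w * v) = (1 : PowerSeries ℂ) := by
      rw [hwv, ← coe_substAlgHom hs, map_one]
    have h2 : PowerSeries.subst (-(X * v)) w = v := by
      rw [hw, ← coe_substAlgHom hs, map_add, map_one, map_smul, substAlgHom_X]
      have : v * w = 1 := by rw [mul_comm]; exact hwv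
      rw [hw, mul_add, mul_smul_comm] at this
      rw [smul_neg, mul_comm X v]
      linear_combination -this
    rw [subst_mul hs, h2] at h1
    rw [subst_mul hs, subst_X hs]
    linear_combination (-X) * h1
  have hk : PowerSeries.subst (X * v) (PowerSeries.subst (-X : PowerSeries ℂ) g)
      = PowerSeries.subst (-(X * v)) g := by
    rw [subst_comp_subst_apply hm hb, hbm]
  have hg2 := congrArg (PowerSeries.subst (-(X * v))) hg
  rw [subst_comp_subst_apply hb hs, hsb, subst_mul hs] at hg2
  have e1 : PowerSeries.subst (-(X * v)) (1 - X ^ 2 : PowerSeries ℂ) = 1 - (X * v) ^ 2 := by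
    rw [← coe_substAlgHom hs, map_sub, map_one, map_pow, substAlgHom_X, neg_sq]
  have e2 : PowerSeries.subst (X * v) (1 - X ^ 2 : PowerSeries ℂ) = 1 - (X * v) ^ 2 := by
    rw [← coe_substAlgHom hb, map_sub, map_one, map_pow, substAlgHom_X]
  rw [e1] at hg2
  refine fixed_eq (-(N : ℂ)) (by simp; omega) v _ hv0 hv1 ?_ ?_
  · rw [subst_mul hb, subst_mul hb, hk, hg, e2, hg2]
    ring
  · rw [← substC_eq _ _ hm0]
    have : constantCoeff (PowerSeries.substC (-X) g) = 1 := by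
      rw [← coeff_zero_eq_constantCoeff_apply]
      simp [PowerSeries.substC, hg1]
    simp [this, hg1]

lemma Pmat_sq (N : ℕ) : Pmat N * Pmat N = 1 := by
  ext p q : 2
  rw [Matrix.mul_apply, Finset.sum_eq_single (p.2, p.1)]
  · simp only [Pmat, Matrix.of_apply, Matrix.one_apply, Prod.ext_iff]
    simp [and_comm]
  · rintro ⟨a, b⟩ _ h
    have : ¬ (p.1 = b ∧ p.2 = a) := by
      rintro ⟨rfl, rfl⟩
      exact h rfl
    simp [Pmat, this]
  · simp

/-- Unitarity of the normalized Yang R-matrix: if `g ∈ ℂ[[t]]` has constant coefficient `1`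
and satisfies `g(t(1+Nt)⁻¹) = g(t)(1−t²)`, then in `End(ℂ^N) ⊗ End(ℂ^N)` with entries in
`ℂ[[h,t]]` (variables `h = X 0`, `t = X 1`) one has
`(g(h·t)(1 − h·t·P)) · (g(−h·t)(1 + h·t·P)) = 1`; equivalently `g(t)·g(−t)·(1−t²) = 1`. -/
theorem statement2 (N : ℕ) (hN : 2 ≤ N) (g : PowerSeries ℂ)
    (hg1 : PowerSeries.constantCoeff g = 1)
    (hg : PowerSeries.substC (PowerSeries.X * (1 + (N : ℂ) • PowerSeries.X)⁻¹) g
        = g * (1 - PowerSeries.X ^ 2)) :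
    (substM (MvPowerSeries.X 0 * MvPowerSeries.X 1) g •
        ((1 : Matrix (Fin N × Fin N) (Fin N × Fin N) (MvPowerSeries (Fin 2) ℂ))
          - (MvPowerSeries.X 0 * MvPowerSeries.X 1 : MvPowerSeries (Fin 2) ℂ) • Pmat N)) *
      (substM (-(MvPowerSeries.X 0 * MvPowerSeries.X 1)) g •
        ((1 : Matrix (Fin N × Fin N) (Fin N × Fin N) (MvPowerSeries (Fin 2) ℂ))
          + (MvPowerSeries.X 0 * MvPowerSeries.X 1 : MvPowerSeries (Fin 2) ℂ) • Pmat N)) = 1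
    ∧ g * PowerSeries.substC (-PowerSeries.X) g * (1 - PowerSeries.X ^ 2) = 1 := by
  have hid := scalar_id N hN g hg1 hg
  refine ⟨?_, by rw [substC_eq _ _ (by simp)]; exact hid⟩
  set a : MvPowerSeries (Fin 2) ℂ := MvPowerSeries.X 0 * MvPowerSeries.X 1 with ha
  have ha0 : MvPowerSeries.constantCoeff a = 0 := by simp [ha]
  have hn0 : MvPowerSeries.constantCoeff (-a) = 0 := by simp [ha]
  have hsa := PowerSeries.HasSubst.of_constantCoeff_zero ha0
  have hm := PowerSeries.HasSubst.of_constantCoeff_zero'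
    (show PowerSeries.constantCoeff (-PowerSeries.X : PowerSeries ℂ) = 0 by simp)
  rw [substM_eq _ _ ha0, substM_eq _ _ hn0]
  have key := congrArg (PowerSeries.subst a) hid
  have e1 : PowerSeries.subst a (-PowerSeries.X : PowerSeries ℂ) = -a := by
    rw [← PowerSeries.coe_substAlgHom hsa, map_neg, PowerSeries.substAlgHom_X]
  have e2 : PowerSeries.subst a (1 - PowerSeries.X ^ 2 : PowerSeries ℂ) = 1 - a ^ 2 := by
    rw [← PowerSeries.coe_substAlgHom hsa, map_sub, map_one, map_pow, PowerSeries.substAlgHom_X]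
  have e3 : PowerSeries.subst a (1 : PowerSeries ℂ) = 1 := by
    rw [← PowerSeries.coe_substAlgHom hsa, map_one]
  rw [PowerSeries.subst_mul hsa, PowerSeries.subst_mul hsa,
    PowerSeries.subst_comp_subst_apply hm hsa, e1, e2, e3] at key
  have hP : (1 - a • Pmat N) * (1 + a • Pmat N) = (1 - a ^ 2) • (1 : Matrix _ _ _) := by
    rw [sub_mul, mul_add, mul_add, smul_mul_smul_comm, Pmat_sq, sub_smul, sq]
    simp only [one_mul, mul_one, one_smul]
    abel
  rw [smul_mul_smul_comm, hP, smul_smul, key, one_smul]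
end

section
/- (Fusion procedure.) Let n ≥ 1. In the group algebra ℚ[Sₙ] of the symmetric group Sₙ, the ordered product ∏_{i=1}^{n−1} ∏_{j=i+1}^{n} ( 1 − (j−i)⁻¹·(i j) ), with factors multiplied from left to right first by increasing i and, for each fixed i, by increasing j, equals Σ_{s ∈ Sₙ} sgn(s)·s, i.e. n! times the antisymmetrizer a^{(n)} = (1/n!)·Σ_{s ∈ Sₙ} sgn(s)·s. Here (i j) denotes the transposition of i and j. -/
/-- The factor `1 − (j−i)⁻¹·(i j)` in the group algebra `ℚ[Sₙ]`. -/
noncomputable def fusionFactor (n : ℕ) (i j : Fin n) :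
    MonoidAlgebra ℚ (Equiv.Perm (Fin n)) :=
  1 - (((j.val - i.val : ℕ) : ℚ))⁻¹ •
    MonoidAlgebra.of ℚ (Equiv.Perm (Fin n)) (Equiv.swap i j)

open Equiv in
/-- embedding of `S_n` fixing `0`. -/
def fusPhi (n : ℕ) : Equiv.Perm (Fin n) →* Equiv.Perm (Fin (n+1)) :=
  MonoidHom.mk' (fun e => Equiv.Perm.decomposeFin.symm (0, e)) (by
    intro a b
    ext i
    refine Fin.cases ?_ (fun j => ?_) i <;> simp)

theorem fusPhi_zero (n : ℕ) (e : Equiv.Perm (Fin n)) : fusPhi n e 0 = 0 := by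
  simp [fusPhi]

theorem fusPhi_succ (n : ℕ) (e : Equiv.Perm (Fin n)) (i : Fin n) :
    fusPhi n e i.succ = (e i).succ := by
  simp [fusPhi]

theorem fusPhi_swap (n : ℕ) (i j : Fin n) :
    fusPhi n (Equiv.swap i j) = Equiv.swap i.succ j.succ := by
  ext k
  refine Fin.cases ?_ (fun k => ?_) k
  · rw [fusPhi_zero, Equiv.swap_apply_of_ne_of_ne] <;> exact (Fin.succ_ne_zero _).symm
  · rw [fusPhi_succ]
    simp only [Equiv.swap_apply_def, Fin.succ_inj]
    split_ifs <;> rfl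

theorem fus_decomp (n : ℕ) (p : Fin (n+1)) (e : Equiv.Perm (Fin n)) :
    Equiv.Perm.decomposeFin.symm (p, e) = Equiv.swap 0 p * fusPhi n e := by
  ext k
  refine Fin.cases ?_ (fun k => ?_) k
  · simp [fusPhi_zero]
  · simp [fusPhi_succ]

/-- the induced map on group algebras. -/
noncomputable def fusMap (n : ℕ) : MonoidAlgebra ℚ (Equiv.Perm (Fin n)) →ₐ[ℚ]
    MonoidAlgebra ℚ (Equiv.Perm (Fin (n+1))) :=
  MonoidAlgebra.lift ℚ _ _ ((MonoidAlgebra.of ℚ (Equiv.Perm (Fin (n+1)))).comp (fusPhi n))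

theorem fusMap_of (n : ℕ) (e : Equiv.Perm (Fin n)) :
    fusMap n (MonoidAlgebra.of ℚ _ e) = MonoidAlgebra.of ℚ _ (fusPhi n e) := by
  rw [fusMap, MonoidAlgebra.lift_of]; rfl

theorem fusMap_factor (n : ℕ) (i j : Fin n) :
    fusionFactor (n+1) i.succ j.succ = fusMap n (fusionFactor n i j) := by
  simp only [fusionFactor, map_sub, map_one, map_smul, fusMap_of, fusPhi_swap]
  simp

/-- the unnormalised antisymmetrizer. -/
noncomputable def fusA (n : ℕ) : MonoidAlgebra ℚ (Equiv.Perm (Fin n)) :=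
  ∑ s : Equiv.Perm (Fin n),
    ((Equiv.Perm.sign s : ℤ) : ℚ) • MonoidAlgebra.of ℚ (Equiv.Perm (Fin n)) s

theorem fusA_swap (n : ℕ) (i j : Fin n) (h : i ≠ j) :
    MonoidAlgebra.of ℚ _ (Equiv.swap i j) * fusA n = - fusA n := by
  rw [fusA, Finset.mul_sum, ← Finset.sum_neg_distrib]
  refine Fintype.sum_equiv (Equiv.mulLeft (Equiv.swap i j)) _ _ (fun s => ?_)
  rw [Equiv.coe_mulLeft, Equiv.Perm.sign_mul, Equiv.Perm.sign_swap h, map_mul, mul_smul_comm]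
  simp

theorem fusA_succ (n : ℕ) :
    fusA (n+1) = fusMap n (fusA n) - ∑ i : Fin n,
      MonoidAlgebra.of ℚ _ (Equiv.swap 0 i.succ) * fusMap n (fusA n) := by
  have h : fusA (n+1) = ∑ p : Fin (n+1), (if p = 0 then (1:ℚ) else -1) •
      (MonoidAlgebra.of ℚ _ (Equiv.swap 0 p) * fusMap n (fusA n)) := by
    rw [fusA, ← Equiv.sum_comp Equiv.Perm.decomposeFin.symm, Fintype.sum_prod_type]
    refine Finset.sum_congr rfl fun p _ => ?_
    rw [fusA, map_sum, Finset.mul_sum, Finset.smul_sum]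
    refine Finset.sum_congr rfl fun e _ => ?_
    rw [Equiv.Perm.decomposeFin.symm_sign, fus_decomp, map_mul, map_smul, fusMap_of,
      mul_smul_comm, smul_smul]
    congr 1
    split_ifs <;> simp
  rw [h, Fin.sum_univ_succ]
  simp only [Fin.succ_ne_zero, if_true, if_false, Equiv.swap_self, neg_smul, one_smul,
    Finset.sum_neg_distrib, sub_eq_add_neg]
  congr 1
  exact one_mul _

theorem fus_prod_y {A : Type*} [Ring A] [Algebra ℚ A] (m : ℕ) (x : Fin m → A) (y : A)
    (h : ∀ i, x i * y = -y) :
    ((List.finRange m).map fun i => 1 - ((i.val + 1 : ℕ) : ℚ)⁻¹ • x i).prod * y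
      = ((m + 1 : ℕ) : ℚ) • y := by
  induction m with
  | zero => simp
  | succ m ih =>
    rw [List.finRange_succ_last]
    simp only [List.map_append, List.map_map, List.prod_append, List.map_cons, List.map_nil,
      List.prod_singleton]
    have h1 : (1 - (((Fin.last m).val + 1 : ℕ) : ℚ)⁻¹ • x (Fin.last m)) * y
        = (1 + ((m + 1 : ℕ) : ℚ)⁻¹) • y := by
      rw [sub_mul, smul_mul_assoc, h, add_smul]; simp
    have := ih (fun i => x i.castSucc) (fun i => h _)
    rw [mul_assoc, h1, mul_smul_comm]
    simp only [Function.comp_def, Fin.val_castSucc]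
    rw [this, smul_smul]
    congr 1
    push_cast
    field_simp

theorem fus_prod_a {A : Type*} [Ring A] [Algebra ℚ A] (m : ℕ) (x : Fin m → A) (a : A)
    (h : ∀ i j, i < j → x i * (x j * a) = -(x j * a)) :
    ((List.finRange m).map fun i => 1 - ((i.val + 1 : ℕ) : ℚ)⁻¹ • x i).prod * a
      = a - ∑ i, x i * a := by
  induction m with
  | zero => simp
  | succ m ih =>
    rw [List.finRange_succ_last]
    simp only [List.map_append, List.map_map, List.prod_append, List.map_cons, List.map_nil,
      List.prod_singleton]
    have h1 := ih (fun i => x i.castSucc) (fun i j hij => h _ _ (by simpa using hij))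
    have h2 := fus_prod_y m (fun i => x i.castSucc) (x (Fin.last m) * a)
      (fun i => h _ _ (Fin.castSucc_lt_last i))
    rw [mul_assoc, sub_mul, one_mul, smul_mul_assoc, mul_sub, mul_smul_comm]
    simp only [Function.comp_def, Fin.val_castSucc]
    rw [h1, h2, smul_smul, Fin.val_last, inv_mul_cancel₀ (by positivity), one_smul,
      Fin.sum_univ_castSucc, sub_sub]

theorem fus_main (n : ℕ) :
    ((List.finRange n).map fun i =>
        ((((List.finRange n).filter fun j => decide (i < j)).map
          (fusionFactor n i)).prod)).prod = fusA n := by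
  induction n with
  | zero => simp [fusA, MonoidAlgebra.one_def]
  | succ n ih =>
    have h0 : ∀ i : Fin n, (((List.finRange (n+1)).filter fun j => decide (i.succ < j)).map
          (fusionFactor (n+1) i.succ)).prod = fusMap n
          ((((List.finRange n).filter fun j => decide (i < j)).map
          (fusionFactor n i)).prod) := by
      intro i
      rw [List.finRange_succ, List.filter_cons_of_neg (by simp), List.filter_map, List.map_map,
        map_list_prod, List.map_map]
      simp only [Function.comp_def, Fin.succ_lt_succ_iff, fusMap_factor]
    have h1 : (((List.finRange (n+1)).filter fun j => decide (0 < j)).map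
          (fusionFactor (n+1) 0)).prod = ((List.finRange n).map fun i =>
            1 - ((i.val + 1 : ℕ) : ℚ)⁻¹ •
              MonoidAlgebra.of ℚ (Equiv.Perm (Fin (n+1))) (Equiv.swap 0 i.succ)).prod := by
      rw [List.finRange_succ, List.filter_cons_of_neg (by simp), List.filter_map, List.map_map]
      simp [Function.comp_def, fusionFactor]
    have h2 : ((List.finRange (n+1)).map fun i =>
        ((((List.finRange (n+1)).filter fun j => decide (i < j)).map
          (fusionFactor (n+1) i)).prod)).prod =
        (((List.finRange (n+1)).filter fun j => decide (0 < j)).map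
          (fusionFactor (n+1) 0)).prod * fusMap n (fusA n) := by
      conv_lhs => rw [List.finRange_succ (n := n), List.map_cons, List.prod_cons, List.map_map]
      rw [← List.finRange_succ, ← ih, map_list_prod, List.map_map]
      simp only [Function.comp_def, h0]
    rw [h2, h1, fus_prod_a, fusA_succ]
    intro i j hij
    have hs : Equiv.swap (0 : Fin (n+1)) i.succ * Equiv.swap 0 j.succ
        = Equiv.swap 0 j.succ * fusPhi n (Equiv.swap i j) := by
      rw [fusPhi_swap, Equiv.mul_swap_eq_swap_mul (Equiv.swap 0 j.succ), Equiv.swap_apply_right,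
        Equiv.swap_apply_of_ne_of_ne (Fin.succ_ne_zero _) (by simpa using hij.ne),
        Equiv.swap_comm i.succ 0]
    rw [← mul_assoc, ← map_mul, hs, map_mul, mul_assoc, ← fusMap_of, ← map_mul,
      fusA_swap n i j hij.ne, map_neg, mul_neg]

/-- Fusion procedure: in `ℚ[Sₙ]`, the ordered product
`∏_{i=1}^{n−1} ∏_{j=i+1}^{n} (1 − (j−i)⁻¹·(i j))`, with factors multiplied from left to
right first by increasing `i` and, for each fixed `i`, by increasing `j`, equals
`Σ_{s ∈ Sₙ} sgn(s)·s = n!·a^{(n)}`, where `a^{(n)}` is the antisymmetrizer. -/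
theorem statement5 (n : ℕ) (hn : 1 ≤ n) :
    ((List.finRange n).map fun i =>
        ((((List.finRange n).filter fun j => decide (i < j)).map
          (fusionFactor n i)).prod)).prod
      = ∑ s : Equiv.Perm (Fin n),
          ((Equiv.Perm.sign s : ℤ) : ℚ) • MonoidAlgebra.of ℚ (Equiv.Perm (Fin n)) s := by
  exact fus_main n
end

section
/- Let N ≥ 2 and n ≥ 1 be integers. Consider operators on (ℂ^N)^{⊗(n+1)} with tensor factors labeled 0, 1, …, n, with entries in the field ℂ(h,z) of rational functions. Let A^{(n)} = (1/n!)·Σ_{s ∈ Sₙ} sgn(s)·ρ(s), where ρ(s) permutes the tensor factors 1, …, n according to s and fixes factor 0. Then A^{(n)} · R_{0n}(z+(n−1)h) · R_{0,n−1}(z+(n−2)h) ⋯ R_{01}(z) = R_{01}(z) · R_{02}(z+h) ⋯ R_{0n}(z+(n−1)h) · A^{(n)}, where R_{0j}(x) = 1 − h·x⁻¹·P_{0j} and P_{0j} is the permutation operator exchanging factors 0 and j. (This is the rational form of the lemma stating that the antisymmetrizer A^{(n)} reverses the order of the string of R-matrices R̄^{12}_{1n}(u₀ | u_{[n]}) at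 the consecutive points u_{[n]} = (u, u−h, …, u−(n−1)h), the scalar normalizing factors being the same on both sides.) -/
/- Operators on `(ℂ^N)^{⊗(n+1)}` with tensor factors labeled `0, 1, …, n` (factor `0` is
the first component, factors `1, …, n` are indexed by `Fin n`), with entries in the field
`ℂ(h,z)` of rational functions, realized as `FractionRing (MvPolynomial (Fin 2) ℂ)` with
`h = X 0` and `z = X 1`. -/

/-- The action `ρ(s)` of a permutation `s ∈ Sₙ` permuting the tensor factors `1, …, n`
and fixing factor `0`. -/
noncomputable def rho (N n : ℕ) (s : Equiv.Perm (Fin n)) :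
    Matrix (Fin N × (Fin n → Fin N)) (Fin N × (Fin n → Fin N))
      (FractionRing (MvPolynomial (Fin 2) ℂ)) :=
  Matrix.of fun p q => if p.1 = q.1 ∧ ∀ k, p.2 k = q.2 (s k) then 1 else 0

/-- The antisymmetrizer `A^{(n)} = (1/n!)·Σ_{s ∈ Sₙ} sgn(s)·ρ(s)` acting on the tensor
factors `1, …, n`. -/
noncomputable def antisym (N n : ℕ) :
    Matrix (Fin N × (Fin n → Fin N)) (Fin N × (Fin n → Fin N))
      (FractionRing (MvPolynomial (Fin 2) ℂ)) :=
  ((n.factorial : FractionRing (MvPolynomial (Fin 2) ℂ)))⁻¹ •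
    ∑ s : Equiv.Perm (Fin n),
      (((Equiv.Perm.sign s : ℤ) : FractionRing (MvPolynomial (Fin 2) ℂ))) • rho N n s

/-- The permutation operator `P_{0j}` exchanging factor `0` and factor `j`
(for `j : Fin n` labeling the factor `j+1` in the paper's numbering `1, …, n`). -/
noncomputable def P0 (N n : ℕ) (j : Fin n) :
    Matrix (Fin N × (Fin n → Fin N)) (Fin N × (Fin n → Fin N))
      (FractionRing (MvPolynomial (Fin 2) ℂ)) :=
  Matrix.of fun p q =>
    if p.1 = q.2 j ∧ p.2 j = q.1 ∧ ∀ k, k ≠ j → p.2 k = q.2 k then 1 else 0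

/-- The Yang R-matrix `R_{0,j+1}(z + j·h) = 1 − h·(z + j·h)⁻¹·P_{0,j+1}` acting on
factors `0` and `j+1`, where `h = X 0` and `z = X 1` in `ℂ(h,z)`. -/
noncomputable def R0 (N n : ℕ) (j : Fin n) :
    Matrix (Fin N × (Fin n → Fin N)) (Fin N × (Fin n → Fin N))
      (FractionRing (MvPolynomial (Fin 2) ℂ)) :=
  1 - (algebraMap (MvPolynomial (Fin 2) ℂ) _ (MvPolynomial.X 0) *
        (algebraMap (MvPolynomial (Fin 2) ℂ) _ (MvPolynomial.X 1) +
          ((j : ℕ) : FractionRing (MvPolynomial (Fin 2) ℂ)) *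
            algebraMap (MvPolynomial (Fin 2) ℂ) _ (MvPolynomial.X 0))⁻¹) • P0 N n j

/-- the matrix of a self-map of the index set -/
noncomputable def pmat {ι K : Type*} [DecidableEq ι] [Field K] (f : ι → ι) : Matrix ι ι K :=
  Matrix.of fun p q => if f p = q then 1 else 0

theorem pmat_mul {ι K : Type*} [DecidableEq ι] [Fintype ι] [Field K] (f g : ι → ι) :
    (pmat f * pmat g : Matrix ι ι K) = pmat (g ∘ f) := by
  ext p q
  simp only [pmat, Matrix.mul_apply, Matrix.of_apply, Function.comp]
  rw [Finset.sum_eq_single (f p)]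
  · simp
  · intro b _ hb
    simp [hb.symm]
  · simp

def rfun (N n : ℕ) (s : Equiv.Perm (Fin n)) (p : Fin N × (Fin n → Fin N)) :
    Fin N × (Fin n → Fin N) := (p.1, p.2 ∘ s.symm)

def pfun (N n : ℕ) (j : Fin n) (p : Fin N × (Fin n → Fin N)) :
    Fin N × (Fin n → Fin N) := (p.2 j, Function.update p.2 j p.1)

theorem rho_eq (N n : ℕ) (s : Equiv.Perm (Fin n)) : rho N n s = pmat (rfun N n s) := by
  ext p q
  simp only [rho, pmat, rfun, Matrix.of_apply]
  congr 1
  rw [Prod.ext_iff, funext_iff]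
  apply propext
  refine and_congr Iff.rfl ⟨fun h k => ?_, fun h k => ?_⟩
  · simpa using h (s.symm k)
  · simpa using h (s k)

theorem P0_eq (N n : ℕ) (j : Fin n) : P0 N n j = pmat (pfun N n j) := by
  ext p q
  simp only [P0, pmat, pfun, Matrix.of_apply]
  congr 1
  rw [Prod.ext_iff, funext_iff]
  apply propext
  constructor
  · rintro ⟨h1, h2, h3⟩
    refine ⟨h2, fun k => ?_⟩
    by_cases hk : k = j
    · subst hk; simpa using h1
    · simpa [Function.update_apply, hk] using h3 k hk
  · rintro ⟨h1, h2⟩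
    refine ⟨by simpa using h2 j, h1, fun k hk => ?_⟩
    simpa [Function.update_apply, hk] using h2 k

theorem rho_mul (N n : ℕ) (s t : Equiv.Perm (Fin n)) :
    rho N n s * rho N n t = rho N n (t * s) := by
  rw [rho_eq, rho_eq, rho_eq, pmat_mul]
  rfl

theorem rho_P0 (N n : ℕ) (s : Equiv.Perm (Fin n)) (j : Fin n) :
    rho N n s * P0 N n j = P0 N n (s.symm j) * rho N n s := by
  rw [rho_eq, P0_eq, P0_eq, pmat_mul, pmat_mul]
  congr 1
  funext p
  refine Prod.ext rfl (funext fun k => ?_)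
  simp [rfun, pfun, Function.update_apply]

theorem P0_P0 (N n : ℕ) (j k : Fin n) (h : j ≠ k) :
    P0 N n j * P0 N n k = rho N n (Equiv.swap j k) * P0 N n j := by
  rw [rho_eq, P0_eq, P0_eq, pmat_mul, pmat_mul]
  congr 1
  funext p
  refine Prod.ext ?_ (funext fun i => ?_)
  · simp [rfun, pfun, Function.update_apply, h.symm]
  · simp only [rfun, pfun, Function.update_apply, Function.comp, Equiv.symm_swap,
      Equiv.swap_apply_def]
    split_ifs <;> simp_all

theorem rho_antisym (N n : ℕ) (j k : Fin n) (h : j ≠ k) :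
    rho N n (Equiv.swap j k) * antisym N n = - antisym N n := by
  rw [antisym, Matrix.mul_smul, ← smul_neg, Finset.mul_sum, ← Finset.sum_neg_distrib]
  congr 1
  refine Fintype.sum_equiv (Equiv.mulRight (Equiv.swap j k)) _ _ fun s => ?_
  rw [Matrix.mul_smul, rho_mul]
  simp [Equiv.Perm.sign_swap h]

theorem antisym_rho (N n : ℕ) (j k : Fin n) (h : j ≠ k) :
    antisym N n * rho N n (Equiv.swap j k) = - antisym N n := by
  rw [antisym, Matrix.smul_mul, ← smul_neg, Finset.sum_mul, ← Finset.sum_neg_distrib]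
  congr 1
  refine Fintype.sum_equiv (Equiv.mulLeft (Equiv.swap j k)) _ _ fun s => ?_
  rw [Matrix.smul_mul, rho_mul]
  simp [Equiv.Perm.sign_swap h]

theorem antisym_comm (N n : ℕ) :
    antisym N n * ∑ j, P0 N n j = (∑ j, P0 N n j) * antisym N n := by
  rw [antisym, Matrix.smul_mul, Matrix.mul_smul, Finset.sum_mul, Finset.mul_sum]
  congr 1
  refine Finset.sum_congr rfl fun s _ => ?_
  rw [Matrix.smul_mul, Matrix.mul_smul, Finset.sum_mul, Finset.mul_sum]
  congr 1
  exact Fintype.sum_equiv s.symm _ _ fun j => rho_P0 N n s j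

theorem left_rel (N n : ℕ) (j k : Fin n) (h : j ≠ k) :
    antisym N n * P0 N n j * P0 N n k = - (antisym N n * P0 N n j) := by
  rw [mul_assoc, P0_P0 N n j k h, ← mul_assoc, antisym_rho N n j k h, neg_mul]

theorem right_rel (N n : ℕ) (j k : Fin n) (h : j ≠ k) :
    P0 N n k * (P0 N n j * antisym N n) = - (P0 N n j * antisym N n) := by
  rw [← mul_assoc, P0_P0 N n k j h.symm, rho_P0, mul_assoc, rho_antisym N n k j h.symm]
  simp

/-- abstract fusion -/
theorem fusion_left {K M : Type*} [Field K] [Ring M] [Algebra K M] (n : ℕ) (A : M)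
    (P : Fin n → M) (h z : K) (hz : ∀ k : ℕ, z + (k : K) * h ≠ 0)
    (hA : ∀ j k : Fin n, j ≠ k → A * P j * P k = - (A * P j)) (m : ℕ) (hm : m ≤ n) :
    A * (((List.finRange n).drop (n - m)).reverse.map
        (fun j : Fin n => 1 - (h * (z + ((j : ℕ) : K) * h)⁻¹) • P j)).prod
      = A - (h * (z + ((n - m : ℕ) : K) * h)⁻¹) •
          (A * (((List.finRange n).drop (n - m)).map P).sum) := by
  induction m with
  | zero =>
    have : (List.finRange n).drop (n - 0) = [] := List.drop_of_length_le (by simp)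
    simp only [this]
    simp
  | succ m ih =>
    have ih := ih (by omega)
    set k := n - (m + 1) with hk
    have hk1 : n - m = k + 1 := by omega
    have hkn : k < n := by omega
    rw [hk1] at ih
    have hd : (List.finRange n).drop k = ⟨k, hkn⟩ :: (List.finRange n).drop (k + 1) := by
      rw [List.drop_eq_getElem_cons (by simpa using hkn)]
      simp
    have hnot : ∀ j ∈ (List.finRange n).drop (k + 1), j ≠ ⟨k, hkn⟩ := by
      have hn := (List.nodup_finRange n).sublist (List.drop_sublist k _)
      rw [hd, List.nodup_cons] at hn
      intro j hj hjk
      exact hn.1 (hjk ▸ hj)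
    rw [hd]
    generalize (List.finRange n).drop (k + 1) = l at ih hnot
    have hS : A * (l.map P).sum * P ⟨k, hkn⟩ = - (A * (l.map P).sum) := by
      clear ih hd
      induction l with
      | nil => simp
      | cons a l ihl =>
        have h1 := ihl fun j hj => hnot j (List.mem_cons_of_mem _ hj)
        have h2 := hA a ⟨k, hkn⟩ (hnot a List.mem_cons_self)
        simp only [List.map_cons, List.sum_cons, mul_add, add_mul, h1, h2, neg_add]
    rw [List.reverse_cons, List.map_append, List.prod_append, ← mul_assoc, ih]
    simp only [List.map_cons, List.map_nil, List.prod_cons, List.prod_nil, mul_one,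
      List.sum_cons, mul_add]
    have e1 := hz k
    have e2 := hz (k + 1)
    push_cast at e2 ⊢
    rw [mul_sub, mul_one, sub_mul, mul_smul_comm, mul_smul_comm, smul_mul_assoc, hS]
    have e3 : h * (z + ((k : K) + 1) * h)⁻¹ * (1 + h * (z + (k : K) * h)⁻¹)
        = h * (z + (k : K) * h)⁻¹ := by
      have e4 : z + ((k : K) + 1) * h = (z + (k : K) * h) + h := by ring
      rw [e4] at e2 ⊢
      generalize z + (k : K) * h = a at e1 e2 ⊢
      field_simp
    rw [smul_add]
    nth_rewrite 4 [← e3]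
    module

theorem fusion_right {K M : Type*} [Field K] [Ring M] [Algebra K M] (n : ℕ) (A : M)
    (P : Fin n → M) (h z : K) (hz : ∀ k : ℕ, z + (k : K) * h ≠ 0)
    (hA : ∀ j k : Fin n, j ≠ k → P k * (P j * A) = - (P j * A)) :
    (((List.finRange n)).map
        (fun j : Fin n => 1 - (h * (z + ((j : ℕ) : K) * h)⁻¹) • P j)).prod * A
      = A - (h * z⁻¹) • (((List.finRange n).map P).sum * A) := by
  have := fusion_left (M := Mᵐᵒᵖ) n (MulOpposite.op A) (fun j => MulOpposite.op (P j)) h z hz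
    (fun j k hjk => by
      have := congrArg MulOpposite.op (hA j k hjk)
      simpa using this) n le_rfl
  have hsum : ∀ l : List (Fin n), MulOpposite.unop
      (l.map (fun j => MulOpposite.op (P j))).sum = (l.map P).sum := by
    intro l
    induction l with
    | nil => rfl
    | cons a l ih => simp [ih]
  have := congrArg MulOpposite.unop this
  simpa [MulOpposite.unop_list_prod, List.map_reverse, Function.comp_def, hsum] using this

theorem hz_ne (k : ℕ) :
    (algebraMap (MvPolynomial (Fin 2) ℂ) (FractionRing (MvPolynomial (Fin 2) ℂ))
        (MvPolynomial.X 1) +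
      (k : FractionRing (MvPolynomial (Fin 2) ℂ)) *
        algebraMap (MvPolynomial (Fin 2) ℂ) _ (MvPolynomial.X 0)) ≠ 0 := by
  rw [← map_natCast (algebraMap (MvPolynomial (Fin 2) ℂ)
    (FractionRing (MvPolynomial (Fin 2) ℂ))), ← map_mul, ← map_add]
  intro h0
  have h1 := (map_eq_zero_iff _ (IsFractionRing.injective (MvPolynomial (Fin 2) ℂ)
    (FractionRing (MvPolynomial (Fin 2) ℂ)))).1 h0
  have h2 := congrArg (MvPolynomial.eval ![(0 : ℂ), 1]) h1
  simp at h2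

/-- The antisymmetrizer reverses the string of Yang R-matrices at consecutive points:
`A^{(n)} · R_{0n}(z+(n−1)h) ⋯ R_{01}(z) = R_{01}(z) · R_{02}(z+h) ⋯ R_{0n}(z+(n−1)h) · A^{(n)}`. -/
theorem statement6 (N n : ℕ) (hN : 2 ≤ N) (hn : 1 ≤ n) :
    antisym N n * ((List.finRange n).reverse.map (R0 N n)).prod
      = ((List.finRange n).map (R0 N n)).prod * antisym N n := by
  have hl := fusion_left n (antisym N n) (P0 N n) _ _ hz_ne (left_rel N n) n le_rfl
  have hr := fusion_right n (antisym N n) (P0 N n) _ _ hz_ne (right_rel N n)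
  have hs : ((List.finRange n).map (P0 N n)).sum = ∑ j, P0 N n j := by
    rw [← List.sum_ofFn, List.ofFn_eq_map]
  rw [hs] at hr
  simp only [Nat.sub_self, List.drop_zero, Nat.cast_zero, zero_mul, add_zero, hs] at hl
  refine hl.trans (Eq.trans ?_ hr.symm)
  rw [antisym_comm]
end

section
/- Let M be a module over the formal power series ring ℂ[[h]] and let J ⊆ M be a submodule such that for every x ∈ M, h·x ∈ J implies x ∈ J (equivalently, hⁿ·x ∈ J for some n ≥ 0 implies x ∈ J). Let J̄ = ⋂_{n≥0} (J + hⁿM) be the closure of J in the h-adic topology of M. Then J̄ has the same saturation property: for every x ∈ M and every k ≥ 1, if hᵏ·x ∈ J̄ then x ∈ J̄. -/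
/-- The closure `J̄ = ⋂_{n≥0} (J + hⁿM)` of a submodule `J` in the `h`-adic topology of a
`ℂ[[h]]`-module `M` (with `h = X`). -/
def adicClosure (M : Type*) [AddCommGroup M] [Module (PowerSeries ℂ) M]
    (J : Submodule (PowerSeries ℂ) M) : Set M :=
  ⋂ n : ℕ, {x : M | ∃ y ∈ J, ∃ z : M, x = y + ((PowerSeries.X : PowerSeries ℂ) ^ n) • z}

/-- If a submodule `J` of a `ℂ[[h]]`-module `M` is `h`-saturated (`h·x ∈ J` implies
`x ∈ J`), then its `h`-adic closure `J̄ = ⋂ₙ (J + hⁿM)` is again `h`-saturated: for every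
`x ∈ M` and `k ≥ 1`, `hᵏ·x ∈ J̄` implies `x ∈ J̄`. -/
theorem statement8 (M : Type*) [AddCommGroup M] [Module (PowerSeries ℂ) M]
    (J : Submodule (PowerSeries ℂ) M)
    (hsat : ∀ x : M, (PowerSeries.X : PowerSeries ℂ) • x ∈ J → x ∈ J) :
    ∀ x : M, ∀ k : ℕ, 1 ≤ k →
      ((PowerSeries.X : PowerSeries ℂ) ^ k) • x ∈ adicClosure M J →
      x ∈ adicClosure M J := by
  have hpow : ∀ k : ℕ, ∀ w : M, ((PowerSeries.X : PowerSeries ℂ) ^ k) • w ∈ J → w ∈ J := by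
    intro k
    induction k with
    | zero => intro w hw; simpa using hw
    | succ k ih =>
      intro w hw
      rw [pow_succ, mul_smul] at hw
      exact hsat w (ih _ hw)
  intro x k _ hx
  simp only [adicClosure, Set.mem_iInter, Set.mem_setOf_eq] at hx ⊢
  intro n
  obtain ⟨y, hy, z, hz⟩ := hx (k + n)
  refine ⟨x - ((PowerSeries.X : PowerSeries ℂ) ^ n) • z, hpow k _ ?_, z, by abel⟩
  rw [smul_sub, hz, pow_add, mul_smul, add_sub_cancel_right]
  exact hy
end
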